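/- For all constants c₁, c₂, c₃, M > 0 and every integer s ≥ 1, there exists C > 0 (depending only on c₁, c₂, c₃, M, s) with the following property. Let V be a real inner product space, L : V → V a semi-negative linear map with adjoint L*, P : V → V an orthogonal projection, h > 0, τ > 0 with λ = τ/h ≤ 1, such that for all w, v ∈ V: ‖P L w‖ ≤ c₁ h^{−1/2} |w|_Γ, ‖P L* w‖ ≤ c₁ h^{−1/2} |w|_Γ, |v|_Γ ≤ c₂ h^{−1/2} ‖v‖, and ‖L v‖ ≤ c₃ h^{−1} ‖v‖. Let α₀, …, α_s be reals with |α_i| ≤ M, and let μ_{\underline{i}} be reals with |μ_{\underline{i}}| ≤ M, indexed by the (finitely many) integer vectors \underline{i} = (i₁,…,i_m) with m ≥ 2, all entries ≥ 1, and |\underline{i}| ≤ s. Set R = Σ_{i=0}^s α_i (τL)^i and R̃ = R + Σ_{\underline{i}} μ_{\underline{i}} τ^{|\underline{i}|} L^{\underline{i}}. Then for all w ∈ V, ‖R̃ w‖² ≤ ‖R w‖² + C λ Σ_{i=0}^{2s−2} τ^{2i+1} |L^i w|_Γ². -/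

import Mathlib

open RealInnerProductSpace

/-- The jump seminorm `|v|_Γ = (-⟪(L + L*)v, v⟫)^{1/2}` associated with a
semi-negative operator `L` with adjoint `L*`. -/
noncomputable def jumpSN {V : Type*} [NormedAddCommGroup V] [InnerProductSpace ℝ V]
    (L Lstar : V →ₗ[ℝ] V) (v : V) : ℝ :=
  Real.sqrt (-⟪(L + Lstar) v, v⟫)

/-- Alternating composition `L^{i₁} P L^{i₂} P ⋯ P L^{i_m}` associated with an
integer vector `(i₁, …, i_m)`. -/
def altComp {V : Type*} [AddCommGroup V] [Module ℝ V]
    (L P : V →ₗ[ℝ] V) : List ℕ → (V →ₗ[ℝ] V)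
  | [] => 1
  | [i] => L ^ i
  | i :: rest => L ^ i * P * altComp L P rest

/-!
Rescaling time reduces everything to `T = τL` with `κ = (τ / h)^{1/2} ≤ 1`, for which `‖P T v‖` and
`|⟪(T + T*) v, u⟫|` are of order `κ |v|_Γ` and `κ |v|_Γ ‖u‖`. Write `E = R̃ w - R w`, so that
`‖R̃ w‖² = ‖R w‖² + 2 ⟪R w, E⟫ + ‖E‖²`; it suffices that each error term has a factor `κ²`.
Every summand of `E` is `T^i z` with `z = P T^k ⋯ w` in the range of `P`, hence of norm
`O(κ |·|_Γ)`; this settles `‖E‖²`. For `⟪T^j w, T^i z⟫` a second factor `κ` is gained by moving the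
powers of `T` to the left through `⟪u, T v⟫ = ⟪(T + T*) u, v⟫ - ⟪T u, v⟫`: each step leaves behind
a jump term, and the last term `⟪T^(j+i) w, z⟫ = ⟪P T^(j+i) w, z⟫` contains a projection again.
-/

section Sums

variable {V ι ι' : Type*} [NormedAddCommGroup V] [InnerProductSpace ℝ V]

lemma norm_sum_smul_le_of_forall_norm_le {s : Finset ι} {μ : ι → ℝ} {y : ι → V} {B : ℝ}
    (hy : ∀ l ∈ s, ‖y l‖ ≤ B) : ‖∑ l ∈ s, μ l • y l‖ ≤ (∑ l ∈ s, |μ l|) * B := by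
  rw [Finset.sum_mul]
  refine norm_sum_le_of_le s fun l hl => ?_
  rw [norm_smul, Real.norm_eq_abs]
  exact mul_le_mul_of_nonneg_left (hy l hl) (abs_nonneg _)

lemma sum_abs_le_card_mul {s : Finset ι} {f : ι → ℝ} {M : ℝ} (hf : ∀ i ∈ s, |f i| ≤ M) :
    ∑ i ∈ s, |f i| ≤ s.card * M :=
  (Finset.sum_le_card_nsmul s _ M hf).trans_eq (nsmul_eq_mul _ _)

lemma abs_inner_sum_smul_le_of_forall_abs_inner_le {r : Finset ι} {s : Finset ι'}
    {α : ι → ℝ} {μ : ι' → ℝ} {x : ι → V} {y : ι' → V} {B : ℝ}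
    (hxy : ∀ j ∈ r, ∀ l ∈ s, |⟪x j, y l⟫| ≤ B) :
    |⟪∑ j ∈ r, α j • x j, ∑ l ∈ s, μ l • y l⟫| ≤ (∑ j ∈ r, |α j|) * (∑ l ∈ s, |μ l|) * B := by
  have hrow : ∀ j ∈ r, |⟪x j, ∑ l ∈ s, μ l • y l⟫| ≤ (∑ l ∈ s, |μ l|) * B := fun j hj => by
    rw [inner_sum, Finset.sum_mul]
    refine (Finset.abs_sum_le_sum_abs _ _).trans (Finset.sum_le_sum fun l hl => ?_)
    rw [real_inner_smul_right, abs_mul]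
    exact mul_le_mul_of_nonneg_left (hxy j hj l hl) (abs_nonneg _)
  rw [sum_inner, mul_assoc, Finset.sum_mul]
  refine (Finset.abs_sum_le_sum_abs _ _).trans (Finset.sum_le_sum fun j hj => ?_)
  rw [real_inner_smul_left, abs_mul]
  exact mul_le_mul_of_nonneg_left (hrow j hj) (abs_nonneg _)

end Sums

lemma finite_setOf_pos_sum_le (s : ℕ) :
    {l : List ℕ | (∀ x ∈ l, 1 ≤ x) ∧ l.sum ≤ s}.Finite := by
  refine ((Set.finite_Iic s).biUnion fun n _ =>
    Set.finite_range (Composition.blocks (n := n))).subset fun l ⟨hpos, hsum⟩ => ?_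
  exact Set.mem_biUnion hsum ⟨⟨l, fun hx => hpos _ hx, rfl⟩, rfl⟩

lemma exists_eq_cons_of_two_le_length {α : Type*} {l : List α} (hl : 2 ≤ l.length) :
    ∃ i l', l' ≠ [] ∧ l = i :: l' :=
  match l, hl with
  | i :: j :: l', _ => ⟨i, j :: l', List.cons_ne_nil j l', rfl⟩

lemma sq_rpow_neg_half {h : ℝ} (hh : 0 ≤ h) : (h ^ (-(1 / 2) : ℝ)) ^ 2 = h⁻¹ := by
  rw [← Real.rpow_mul_natCast hh, ← Real.rpow_neg_one]
  norm_num

section Operators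

variable {V : Type*} [NormedAddCommGroup V] [InnerProductSpace ℝ V]

lemma norm_apply_le_of_isSymmetricProjection {P : V →ₗ[ℝ] V} (hP : P.IsSymmetricProjection)
    (v : V) : ‖P v‖ ≤ ‖v‖ := by
  obtain ⟨K, _, rfl⟩ := LinearMap.isSymmetricProjection_iff_eq_coe_starProjection.mp hP
  exact K.norm_starProjection_apply_le v

lemma norm_pow_apply_le_pow_mul_norm {T : V →ₗ[ℝ] V} {c : ℝ} (hc : 0 ≤ c)
    (hT : ∀ v, ‖T v‖ ≤ c * ‖v‖) (i : ℕ) (v : V) : ‖(T ^ i) v‖ ≤ c ^ i * ‖v‖ := by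
  induction i with
  | zero => simp
  | succ i ih =>
    calc ‖(T ^ (i + 1)) v‖ = ‖T ((T ^ i) v)‖ := by rw [pow_succ', Module.End.mul_apply]
      _ ≤ c * (c ^ i * ‖v‖) := (hT _).trans (mul_le_mul_of_nonneg_left ih hc)
      _ = c ^ (i + 1) * ‖v‖ := by ring

lemma isSymmetric_add_of_forall_inner_eq {L L' : V →ₗ[ℝ] V}
    (hadj : ∀ w v, ⟪L w, v⟫ = ⟪w, L' v⟫) : (L + L').IsSymmetric := fun w v => by
  have hadj' : ⟪L' w, v⟫ = ⟪w, L v⟫ := by rw [real_inner_comm, ← hadj, real_inner_comm]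
  rw [LinearMap.add_apply, LinearMap.add_apply, inner_add_left, inner_add_right, hadj, hadj',
    add_comm]

lemma inner_apply_right_eq_inner_add_apply_sub {L L' : V →ₗ[ℝ] V}
    (hadj : ∀ w v, ⟪L w, v⟫ = ⟪w, L' v⟫) (u v : V) :
    ⟪u, L v⟫ = ⟪(L + L') u, v⟫ - ⟪L u, v⟫ := by
  rw [LinearMap.add_apply, inner_add_left, add_sub_cancel_left, real_inner_comm, hadj,
    real_inner_comm]

lemma inner_apply_right_eq_inner_apply_apply {P : V →ₗ[ℝ] V} (hP : P.IsSymmetricProjection)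
    (u v : V) : ⟪u, P v⟫ = ⟪P u, P v⟫ := by
  rw [hP.isSymmetric, ← Module.End.mul_apply P P, hP.isIdempotentElem.eq]

end Operators

section AltComp

variable {V : Type*} [AddCommGroup V] [Module ℝ V]

lemma altComp_cons_apply (L P : V →ₗ[ℝ] V) (i : ℕ) {l : List ℕ} (hl : l ≠ []) (w : V) :
    altComp L P (i :: l) w = (L ^ i) (P (altComp L P l w)) := by
  cases l with
  | nil => exact absurd rfl hl
  | cons j l => rfl

lemma altComp_smul_apply (L P : V →ₗ[ℝ] V) (t : ℝ) (l : List ℕ) (w : V) :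
    altComp (t • L) P l w = t ^ l.sum • altComp L P l w := by
  induction l with
  | nil => simp [altComp]
  | cons i l ih =>
    rcases eq_or_ne l [] with rfl | hl
    · simp [altComp, smul_pow]
    · rw [altComp_cons_apply _ _ _ hl, altComp_cons_apply _ _ _ hl, ih, smul_pow,
        LinearMap.smul_apply, map_smul, map_smul, smul_smul, List.sum_cons, pow_add]

end AltComp

section JumpSeminorm

variable {V : Type*} [NormedAddCommGroup V] [InnerProductSpace ℝ V] {L L' : V →ₗ[ℝ] V}

lemma jumpSN_nonneg (L L' : V →ₗ[ℝ] V) (v : V) : 0 ≤ jumpSN L L' v := Real.sqrt_nonneg _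

lemma jumpSN_apply_smul (L L' : V →ₗ[ℝ] V) (t : ℝ) (v : V) :
    jumpSN L L' (t • v) = |t| * jumpSN L L' v := by
  rw [jumpSN, jumpSN, ← Real.sqrt_sq_eq_abs, ← Real.sqrt_mul (sq_nonneg t), map_smul,
    real_inner_smul_left, real_inner_smul_right]
  ring_nf

lemma jumpSN_smul {t : ℝ} (ht : 0 ≤ t) (L L' : V →ₗ[ℝ] V) (v : V) :
    jumpSN (t • L) (t • L') v = √t * jumpSN L L' v := by
  rw [jumpSN, jumpSN, ← Real.sqrt_mul ht, ← smul_add, LinearMap.smul_apply, real_inner_smul_left,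
    mul_neg]

lemma sq_jumpSN_smul_pow_apply {t : ℝ} (ht : 0 ≤ t) (L L' : V →ₗ[ℝ] V) (i : ℕ) (w : V) :
    jumpSN (t • L) (t • L') (((t • L) ^ i) w) ^ 2
      = t ^ (2 * i + 1) * jumpSN L L' ((L ^ i) w) ^ 2 := by
  rw [jumpSN_smul ht, smul_pow, LinearMap.smul_apply, jumpSN_apply_smul, mul_pow, mul_pow,
    Real.sq_sqrt ht, sq_abs]
  ring

lemma abs_inner_add_apply_le_jumpSN_mul_jumpSN (hsymm : (L + L').IsSymmetric)
    (hneg : ∀ v, ⟪(L + L') v, v⟫ ≤ 0) (v u : V) :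
    |⟪(L + L') v, u⟫| ≤ jumpSN L L' v * jumpSN L L' u := by
  let B : LinearMap.BilinForm ℝ V := -(innerₗ V ∘ₗ (L + L'))
  have hB (x y : V) : B x y = -⟪(L + L') x, y⟫ := rfl
  have hB_nonneg (x : V) : 0 ≤ B x x := neg_nonneg.mpr (hneg x)
  have hB_symm : LinearMap.IsSymm B :=
    ⟨fun x y => by rw [RingHom.id_apply, hB, hB, hsymm x y, real_inner_comm]⟩
  rw [jumpSN, jumpSN, ← hB, ← hB, ← Real.sqrt_mul (hB_nonneg v), ← abs_neg, ← hB]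
  exact Real.abs_le_sqrt (B.apply_sq_le_of_symm hB_nonneg hB_symm v u)

/-- The accumulated jump `(∑_{k < n} |L^k w|_Γ²)^{1/2}` of the first `n` iterates of `w`. For `τL`
in place of `L` its square is the sum on the right-hand side of the energy estimate. -/
noncomputable def totalJump (L L' : V →ₗ[ℝ] V) (n : ℕ) (w : V) : ℝ :=
  √(∑ k ∈ Finset.range n, jumpSN L L' ((L ^ k) w) ^ 2)

lemma totalJump_nonneg (L L' : V →ₗ[ℝ] V) (n : ℕ) (w : V) : 0 ≤ totalJump L L' n w :=
  Real.sqrt_nonneg _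

lemma sq_totalJump (L L' : V →ₗ[ℝ] V) (n : ℕ) (w : V) :
    totalJump L L' n w ^ 2 = ∑ k ∈ Finset.range n, jumpSN L L' ((L ^ k) w) ^ 2 :=
  Real.sq_sqrt (Finset.sum_nonneg fun _ _ => sq_nonneg _)

lemma jumpSN_pow_apply_le_totalJump (L L' : V →ₗ[ℝ] V) {k n : ℕ} (hk : k < n) (w : V) :
    jumpSN L L' ((L ^ k) w) ≤ totalJump L L' n w :=
  Real.le_sqrt_of_sq_le <|
    Finset.single_le_sum (f := fun k => jumpSN L L' ((L ^ k) w) ^ 2)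
      (fun _ _ => sq_nonneg _) (Finset.mem_range.mpr hk)

lemma sq_totalJump_smul {t : ℝ} (ht : 0 ≤ t) (L L' : V →ₗ[ℝ] V) (n : ℕ) (w : V) :
    totalJump (t • L) (t • L') n w ^ 2
      = ∑ k ∈ Finset.range n, t ^ (2 * k + 1) * jumpSN L L' ((L ^ k) w) ^ 2 := by
  rw [sq_totalJump]
  exact Finset.sum_congr rfl fun k _ => sq_jumpSN_smul_pow_apply ht L L' k w

end JumpSeminorm

/-- The properties of the upwind DG operator `L` on a mesh of size `h`, with formal adjoint `L'` and
orthogonal projection `P`, that enter the energy estimate. The mesh size enters through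
`κ = h^{-1/2}`, and one constant `c` serves for all the bounds; this form is stable under rescaling
time, see `UpwindBounds.smul`. -/
structure UpwindBounds {V : Type*} [NormedAddCommGroup V] [InnerProductSpace ℝ V]
    (L L' P : V →ₗ[ℝ] V) (c κ : ℝ) : Prop where
  inner_apply_left : ∀ w v, ⟪L w, v⟫ = ⟪w, L' v⟫
  inner_add_apply_self_nonpos : ∀ v, ⟪(L + L') v, v⟫ ≤ 0
  isSymmetricProjection : P.IsSymmetricProjection
  norm_proj_apply_le : ∀ v, ‖P (L v)‖ ≤ c * κ * jumpSN L L' v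
  jumpSN_le : ∀ v, jumpSN L L' v ≤ c * κ * ‖v‖
  norm_apply_le : ∀ v, ‖L v‖ ≤ c * κ ^ 2 * ‖v‖

namespace UpwindBounds

variable {V : Type*} [NormedAddCommGroup V] [InnerProductSpace ℝ V]
  {L L' T T' P : V →ₗ[ℝ] V} {c κ τ : ℝ} {n s : ℕ}

lemma of_mesh_bounds {c₁ c₂ c₃ h : ℝ} (hh : 0 < h) (hadj : ∀ w v, ⟪L w, v⟫ = ⟪w, L' v⟫)
    (hneg : ∀ v, ⟪(L + L') v, v⟫ ≤ 0) (hP : P.IsSymmetricProjection)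
    (hPL : ∀ w, ‖P (L w)‖ ≤ c₁ * h ^ (-(1 / 2) : ℝ) * jumpSN L L' w)
    (hJ : ∀ v, jumpSN L L' v ≤ c₂ * h ^ (-(1 / 2) : ℝ) * ‖v‖)
    (hL : ∀ v, ‖L v‖ ≤ c₃ * h⁻¹ * ‖v‖) (hc₁ : c₁ ≤ c) (hc₂ : c₂ ≤ c) (hc₃ : c₃ ≤ c) :
    UpwindBounds L L' P c (h ^ (-(1 / 2) : ℝ)) where
  inner_apply_left := hadj
  inner_add_apply_self_nonpos := hneg
  isSymmetricProjection := hP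
  norm_proj_apply_le v := (hPL v).trans <| by
    have := jumpSN_nonneg L L' v
    gcongr
  jumpSN_le v := (hJ v).trans (by gcongr)
  norm_apply_le v := (hL v).trans <| by
    rw [sq_rpow_neg_half hh.le]
    gcongr

lemma smul (hL : UpwindBounds L L' P c κ) (hτ : 0 ≤ τ) :
    UpwindBounds (τ • L) (τ • L') P c (√τ * κ) where
  inner_apply_left w v := by
    simp only [LinearMap.smul_apply, real_inner_smul_left, real_inner_smul_right,
      hL.inner_apply_left]
  inner_add_apply_self_nonpos v := by
    rw [← smul_add, LinearMap.smul_apply, real_inner_smul_left]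
    exact mul_nonpos_of_nonneg_of_nonpos hτ (hL.inner_add_apply_self_nonpos v)
  isSymmetricProjection := hL.isSymmetricProjection
  norm_proj_apply_le v := by
    rw [LinearMap.smul_apply, map_smul, norm_smul, Real.norm_of_nonneg hτ, jumpSN_smul hτ]
    calc τ * ‖P (L v)‖ ≤ τ * (c * κ * jumpSN L L' v) :=
          mul_le_mul_of_nonneg_left (hL.norm_proj_apply_le v) hτ
      _ = √τ * √τ * (c * κ * jumpSN L L' v) := by rw [Real.mul_self_sqrt hτ]
      _ = c * (√τ * κ) * (√τ * jumpSN L L' v) := by ring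
  jumpSN_le v := by
    rw [jumpSN_smul hτ]
    calc √τ * jumpSN L L' v ≤ √τ * (c * κ * ‖v‖) :=
          mul_le_mul_of_nonneg_left (hL.jumpSN_le v) (Real.sqrt_nonneg τ)
      _ = c * (√τ * κ) * ‖v‖ := by ring
  norm_apply_le v := by
    rw [LinearMap.smul_apply, norm_smul, Real.norm_of_nonneg hτ, mul_pow, Real.sq_sqrt hτ]
    calc τ * ‖L v‖ ≤ τ * (c * κ ^ 2 * ‖v‖) := mul_le_mul_of_nonneg_left (hL.norm_apply_le v) hτ
      _ = c * (τ * κ ^ 2) * ‖v‖ := by ring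

lemma norm_proj_pow_succ_apply_le (hT : UpwindBounds T T' P c κ) (hc : 0 ≤ c) (hκ₀ : 0 ≤ κ)
    {k : ℕ} (hk : k < n) (w : V) :
    ‖P ((T ^ (k + 1)) w)‖ ≤ c * (κ * totalJump T T' n w) := by
  rw [pow_succ', Module.End.mul_apply, ← mul_assoc]
  refine (hT.norm_proj_apply_le _).trans ?_
  gcongr
  exact jumpSN_pow_apply_le_totalJump T T' hk w

lemma abs_inner_add_apply_pow_le (hT : UpwindBounds T T' P c κ) {k : ℕ} (hk : k < n) (w u : V) :
    |⟪(T + T') ((T ^ k) w), u⟫| ≤ c * (κ * totalJump T T' n w) * ‖u‖ :=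
  calc |⟪(T + T') ((T ^ k) w), u⟫|
      ≤ jumpSN T T' ((T ^ k) w) * jumpSN T T' u :=
        abs_inner_add_apply_le_jumpSN_mul_jumpSN
          (isSymmetric_add_of_forall_inner_eq hT.inner_apply_left)
          hT.inner_add_apply_self_nonpos _ _
    _ ≤ totalJump T T' n w * (c * κ * ‖u‖) :=
        mul_le_mul (jumpSN_pow_apply_le_totalJump T T' hk w) (hT.jumpSN_le u)
          (jumpSN_nonneg _ _ _) (totalJump_nonneg _ _ _ _)
    _ = c * (κ * totalJump T T' n w) * ‖u‖ := by ring

lemma norm_pow_apply_le (hT : UpwindBounds T T' P c κ) (hc : 0 ≤ c) (hκ₀ : 0 ≤ κ) (hκ₁ : κ ≤ 1)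
    (i : ℕ) (v : V) : ‖(T ^ i) v‖ ≤ c ^ i * ‖v‖ := by
  refine norm_pow_apply_le_pow_mul_norm hc (fun v => (hT.norm_apply_le v).trans ?_) i v
  gcongr
  exact mul_le_of_le_one_right hc (pow_le_one₀ hκ₀ hκ₁)

section OneLe

variable (hT : UpwindBounds T T' P c κ) (hc : 1 ≤ c) (hκ₀ : 0 ≤ κ) (hκ₁ : κ ≤ 1)
include hT hc hκ₀ hκ₁

lemma norm_proj_altComp_le (w : V) {l : List ℕ} (hl : l ≠ []) (hpos : ∀ x ∈ l, 1 ≤ x)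
    (hsum : l.sum ≤ n) :
    ‖P (altComp T P l w)‖ ≤ c ^ l.sum * (κ * totalJump T T' n w) := by
  have hA : 0 ≤ κ * totalJump T T' n w := mul_nonneg hκ₀ (totalJump_nonneg _ _ _ _)
  induction l with
  | nil => exact absurd rfl hl
  | cons i l ih =>
    obtain ⟨hi, hpos⟩ := List.forall_mem_cons.mp hpos
    rw [List.sum_cons] at hsum ⊢
    rcases eq_or_ne l [] with rfl | hl
    · obtain ⟨k, rfl⟩ := Nat.exists_eq_add_of_le' hi
      rw [List.sum_nil, add_zero] at hsum ⊢
      refine (hT.norm_proj_pow_succ_apply_le (by positivity) hκ₀ hsum w).trans ?_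
      gcongr
      exact le_self_pow₀ hc k.succ_ne_zero
    · rw [altComp_cons_apply _ _ _ hl, pow_add, mul_assoc]
      refine (norm_apply_le_of_isSymmetricProjection hT.isSymmetricProjection _).trans ?_
      refine (hT.norm_pow_apply_le (by positivity) hκ₀ hκ₁ i _).trans ?_
      gcongr
      exact ih hl hpos (by omega)

lemma norm_altComp_le (w : V) {l : List ℕ} (hlen : 2 ≤ l.length) (hpos : ∀ x ∈ l, 1 ≤ x)
    (hsum : l.sum ≤ n) :
    ‖altComp T P l w‖ ≤ c ^ l.sum * (κ * totalJump T T' n w) := by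
  obtain ⟨i, l, hl, rfl⟩ := exists_eq_cons_of_two_le_length hlen
  rw [List.sum_cons] at hsum ⊢
  rw [altComp_cons_apply _ _ _ hl, pow_add, mul_assoc]
  refine (hT.norm_pow_apply_le (by positivity) hκ₀ hκ₁ i _).trans ?_
  gcongr
  exact hT.norm_proj_altComp_le hc hκ₀ hκ₁ w hl (List.forall_mem_cons.mp hpos).2 (by omega)

lemma abs_inner_pow_pow_proj_le (w y : V) {i j : ℕ} (hij : 1 ≤ j + i) (hn : j + i ≤ n) :
    |⟪(T ^ j) w, (T ^ i) (P y)⟫|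
      ≤ (i + 1) * c ^ (i + 1) * (κ * totalJump T T' n w) * ‖P y‖ := by
  have hA : 0 ≤ κ * totalJump T T' n w := mul_nonneg hκ₀ (totalJump_nonneg _ _ _ _)
  induction i generalizing j with
  | zero =>
    obtain ⟨k, rfl⟩ := Nat.exists_eq_add_of_le' hij
    calc |⟪(T ^ (k + 1)) w, (T ^ 0) (P y)⟫| ≤ ‖P ((T ^ (k + 1)) w)‖ * ‖P y‖ := by
          rw [pow_zero, Module.End.one_apply,
            inner_apply_right_eq_inner_apply_apply hT.isSymmetricProjection]
          exact abs_real_inner_le_norm _ _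
      _ ≤ c * (κ * totalJump T T' n w) * ‖P y‖ := by
          gcongr
          exact hT.norm_proj_pow_succ_apply_le (by positivity) hκ₀ (by omega) w
      _ = _ := by norm_num
  | succ i ih =>
    have hmove : ⟪(T ^ j) w, (T ^ (i + 1)) (P y)⟫
        = ⟪(T + T') ((T ^ j) w), (T ^ i) (P y)⟫ - ⟪(T ^ (j + 1)) w, (T ^ i) (P y)⟫ := by
      rw [pow_succ' T i, pow_succ' T j, Module.End.mul_apply, Module.End.mul_apply,
        inner_apply_right_eq_inner_add_apply_sub hT.inner_apply_left]
    have hjump : |⟪(T + T') ((T ^ j) w), (T ^ i) (P y)⟫|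
        ≤ c ^ (i + 1) * (κ * totalJump T T' n w) * ‖P y‖ :=
      calc _ ≤ c * (κ * totalJump T T' n w) * ‖(T ^ i) (P y)‖ :=
            hT.abs_inner_add_apply_pow_le (by omega) w _
        _ ≤ c * (κ * totalJump T T' n w) * (c ^ i * ‖P y‖) := by
            gcongr
            exact hT.norm_pow_apply_le (by positivity) hκ₀ hκ₁ i _
        _ = _ := by ring
    calc |⟪(T ^ j) w, (T ^ (i + 1)) (P y)⟫|
        ≤ |⟪(T + T') ((T ^ j) w), (T ^ i) (P y)⟫| + |⟪(T ^ (j + 1)) w, (T ^ i) (P y)⟫| := by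
          rw [hmove]
          exact abs_sub _ _
      _ ≤ c ^ (i + 1) * (κ * totalJump T T' n w) * ‖P y‖
          + (i + 1) * c ^ (i + 1) * (κ * totalJump T T' n w) * ‖P y‖ :=
          add_le_add hjump (ih (by omega) (by omega))
      _ = ((i + 1 : ℕ) + 1) * c ^ (i + 1) * (κ * totalJump T T' n w) * ‖P y‖ := by
          push_cast
          ring
      _ ≤ ((i + 1 : ℕ) + 1) * c ^ (i + 1 + 1) * (κ * totalJump T T' n w) * ‖P y‖ := by
          gcongr
          exact i.le_succ

lemma abs_inner_pow_altComp_le (w : V) {l : List ℕ} {j : ℕ} (hlen : 2 ≤ l.length)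
    (hpos : ∀ x ∈ l, 1 ≤ x) (hsum : j + l.sum ≤ n + 1) :
    |⟪(T ^ j) w, altComp T P l w⟫|
      ≤ l.sum * c ^ (l.sum + 1) * (κ * totalJump T T' n w) ^ 2 := by
  have hA : 0 ≤ κ * totalJump T T' n w := mul_nonneg hκ₀ (totalJump_nonneg _ _ _ _)
  obtain ⟨i, l, hl, rfl⟩ := exists_eq_cons_of_two_le_length hlen
  obtain ⟨hi, hpos⟩ := List.forall_mem_cons.mp hpos
  have hl_sum : 1 ≤ l.sum := List.sum_pos l hpos hl
  rw [List.sum_cons] at hsum ⊢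
  rw [altComp_cons_apply _ _ _ hl]
  calc |⟪(T ^ j) w, (T ^ i) (P (altComp T P l w))⟫|
      ≤ (i + 1) * c ^ (i + 1) * (κ * totalJump T T' n w) * ‖P (altComp T P l w)‖ :=
        hT.abs_inner_pow_pow_proj_le hc hκ₀ hκ₁ w _ (by omega) (by omega)
    _ ≤ (i + 1) * c ^ (i + 1) * (κ * totalJump T T' n w)
          * (c ^ l.sum * (κ * totalJump T T' n w)) := by
        gcongr
        exact hT.norm_proj_altComp_le hc hκ₀ hκ₁ w hl hpos (by omega)
    _ = (i + 1) * c ^ (i + l.sum + 1) * (κ * totalJump T T' n w) ^ 2 := by ring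
    _ ≤ (i + l.sum : ℕ) * c ^ (i + l.sum + 1) * (κ * totalJump T T' n w) ^ 2 := by
        gcongr
        exact_mod_cast Nat.add_le_add_left hl_sum i

lemma norm_add_sum_altComp_sq_le (w : V) {S : Finset (List ℕ)}
    (hS : ∀ l ∈ S, 2 ≤ l.length ∧ (∀ x ∈ l, 1 ≤ x) ∧ l.sum ≤ s) {α : ℕ → ℝ} {μ : List ℕ → ℝ}
    {a m : ℝ} (hα : ∑ i ∈ Finset.range (s + 1), |α i| ≤ a) (hμ : ∑ l ∈ S, |μ l| ≤ m) :
    ‖(∑ i ∈ Finset.range (s + 1), α i • T ^ i) w + ∑ l ∈ S, μ l • altComp T P l w‖ ^ 2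
      ≤ ‖(∑ i ∈ Finset.range (s + 1), α i • T ^ i) w‖ ^ 2
        + (2 * (a * m * (s * c ^ (s + 1))) + (m * c ^ s) ^ 2)
          * (κ * totalJump T T' (2 * s - 1) w) ^ 2 := by
  set A := κ * totalJump T T' (2 * s - 1) w
  set E := ∑ l ∈ S, μ l • altComp T P l w
  have hA : 0 ≤ A := mul_nonneg hκ₀ (totalJump_nonneg _ _ _ _)
  have ha : 0 ≤ a := (Finset.sum_nonneg fun _ _ => abs_nonneg _).trans hα
  have hE : ‖E‖ ≤ m * c ^ s * A := by
    have hterm : ∀ l ∈ S, ‖altComp T P l w‖ ≤ c ^ s * A := fun l hl => by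
      obtain ⟨hlen, hpos, hsum⟩ := hS l hl
      refine (hT.norm_altComp_le hc hκ₀ hκ₁ w hlen hpos (n := 2 * s - 1) (by omega)).trans ?_
      gcongr
    rw [mul_assoc]
    exact (norm_sum_smul_le_of_forall_norm_le hterm).trans (by gcongr)
  have hcross : ⟪(∑ i ∈ Finset.range (s + 1), α i • T ^ i) w, E⟫
      ≤ a * m * (s * c ^ (s + 1) * A ^ 2) := by
    have hterm : ∀ j ∈ Finset.range (s + 1), ∀ l ∈ S,
        |⟪(T ^ j) w, altComp T P l w⟫| ≤ s * c ^ (s + 1) * A ^ 2 := fun j hj l hl => by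
      obtain ⟨hlen, hpos, hsum⟩ := hS l hl
      have hjs : j ≤ s := Finset.mem_range_succ_iff.mp hj
      refine (hT.abs_inner_pow_altComp_le hc hκ₀ hκ₁ w hlen hpos (n := 2 * s - 1)
        (by omega)).trans ?_
      gcongr
    simp only [LinearMap.sum_apply, LinearMap.smul_apply]
    refine (le_abs_self _).trans ((abs_inner_sum_smul_le_of_forall_abs_inner_le hterm).trans ?_)
    gcongr
  calc _ = ‖(∑ i ∈ Finset.range (s + 1), α i • T ^ i) w‖ ^ 2
        + 2 * ⟪(∑ i ∈ Finset.range (s + 1), α i • T ^ i) w, E⟫ + ‖E‖ ^ 2 := norm_add_sq_real _ _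
    _ ≤ ‖(∑ i ∈ Finset.range (s + 1), α i • T ^ i) w‖ ^ 2
        + 2 * (a * m * (s * c ^ (s + 1) * A ^ 2)) + (m * c ^ s * A) ^ 2 := by gcongr
    _ = _ := by ring

end OneLe

lemma energy_estimate (hL : UpwindBounds L L' P c κ) (hc : 1 ≤ c) (hκ : 0 ≤ κ) (hτ : 0 ≤ τ)
    (hτκ : τ * κ ^ 2 ≤ 1) (w : V) {S : Finset (List ℕ)}
    (hS : ∀ l ∈ S, 2 ≤ l.length ∧ (∀ x ∈ l, 1 ≤ x) ∧ l.sum ≤ s) {α : ℕ → ℝ} {μ : List ℕ → ℝ}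
    {a m : ℝ} (hα : ∑ i ∈ Finset.range (s + 1), |α i| ≤ a) (hμ : ∑ l ∈ S, |μ l| ≤ m) :
    ‖(∑ i ∈ Finset.range (s + 1), α i • (τ • L) ^ i) w
        + ∑ l ∈ S, μ l • (τ ^ l.sum • altComp L P l w)‖ ^ 2
      ≤ ‖(∑ i ∈ Finset.range (s + 1), α i • (τ • L) ^ i) w‖ ^ 2
        + (2 * (a * m * (s * c ^ (s + 1))) + (m * c ^ s) ^ 2) * (τ * κ ^ 2)
          * ∑ i ∈ Finset.range (2 * s - 1), τ ^ (2 * i + 1) * jumpSN L L' ((L ^ i) w) ^ 2 := by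
  have hκ_sq : (√τ * κ) ^ 2 = τ * κ ^ 2 := by rw [mul_pow, Real.sq_sqrt hτ]
  have hκ_le : √τ * κ ≤ 1 :=
    (sq_le_one_iff₀ (mul_nonneg (Real.sqrt_nonneg τ) hκ)).mp (hκ_sq.trans_le hτκ)
  simpa only [mul_pow _ (totalJump _ _ _ _), hκ_sq, sq_totalJump_smul hτ, altComp_smul_apply,
    ← mul_assoc] using
    (hL.smul hτ).norm_add_sum_altComp_sq_le hc (by positivity) hκ_le w hS hα hμ

end UpwindBounds

theorem key_energy_estimate_general (c₁ c₂ c₃ M : ℝ) (s : ℕ) :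
    ∃ C > (0 : ℝ),
      ∀ (V : Type*) [NormedAddCommGroup V] [InnerProductSpace ℝ V],
      ∀ L Lstar P : V →ₗ[ℝ] V,
        (∀ w v : V, ⟪L w, v⟫ = ⟪w, Lstar v⟫) →
        (∀ v : V, ⟪(L + Lstar) v, v⟫ ≤ 0) →
        (∀ w v : V, ⟪P w, v⟫ = ⟪w, P v⟫) →
        (∀ v : V, P (P v) = P v) →
        ∀ h τ : ℝ, 0 < h → 0 ≤ τ → τ / h ≤ 1 →
        (∀ w : V, ‖P (L w)‖ ≤ c₁ * h ^ (-(1 / 2) : ℝ) * jumpSN L Lstar w) →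
        (∀ v : V, jumpSN L Lstar v ≤ c₂ * h ^ (-(1 / 2) : ℝ) * ‖v‖) →
        (∀ v : V, ‖L v‖ ≤ c₃ * h⁻¹ * ‖v‖) →
        ∀ α : ℕ → ℝ, (∀ i ≤ s, |α i| ≤ M) →
        ∀ S : Finset (List ℕ),
          (∀ iv ∈ S, 2 ≤ iv.length ∧ (∀ x ∈ iv, 1 ≤ x) ∧ iv.sum ≤ s) →
        ∀ μ : List ℕ → ℝ, (∀ iv ∈ S, |μ iv| ≤ M) →
        ∀ w : V,
          ‖(∑ i ∈ Finset.range (s + 1), α i • ((τ • L) ^ i)) w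
              + ∑ iv ∈ S, μ iv • (τ ^ iv.sum • altComp L P iv w)‖ ^ 2
            ≤ ‖(∑ i ∈ Finset.range (s + 1), α i • ((τ • L) ^ i)) w‖ ^ 2
              + C * (τ / h) * ∑ i ∈ Finset.range (2 * s - 1),
                  τ ^ (2 * i + 1) * (jumpSN L Lstar ((L ^ i) w)) ^ 2 := by
  set N := (finite_setOf_pos_sum_le s).toFinset.card
  set c := max 1 (max c₁ (max c₂ c₃))
  have hc : 1 ≤ c := le_max_left _ _
  refine ⟨2 * ((s + 1 : ℕ) * |M| * (N * |M|) * (s * c ^ (s + 1))) + (N * |M| * c ^ s) ^ 2 + 1,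
    by positivity, ?_⟩
  intro V _ _ L Lstar P hadj hneg hP hPP h τ hh hτ hlam hPL hJ hL α hα S hS μ hμ w
  have hbounds : UpwindBounds L Lstar P c (h ^ (-(1 / 2) : ℝ)) :=
    .of_mesh_bounds hh hadj hneg ⟨LinearMap.ext hPP, hP⟩ hPL hJ hL
      (by simp [c]) (by simp [c]) (by simp [c])
  have hα_sum : ∑ i ∈ Finset.range (s + 1), |α i| ≤ (s + 1 : ℕ) * |M| := by
    simpa only [Finset.card_range] using sum_abs_le_card_mul fun i hi =>
      (hα i (Finset.mem_range_succ_iff.mp hi)).trans (le_abs_self M)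
  have hS_card : S.card ≤ N := Finset.card_le_card fun l hl =>
    (Set.Finite.mem_toFinset _).mpr (hS l hl).2
  have hμ_sum : ∑ l ∈ S, |μ l| ≤ N * |M| :=
    (sum_abs_le_card_mul fun l hl => (hμ l hl).trans (le_abs_self M)).trans (by gcongr)
  rw [div_eq_mul_inv, ← sq_rpow_neg_half hh.le] at hlam ⊢
  refine (hbounds.energy_estimate hc (by positivity) hτ hlam w hS hα_sum hμ_sum).trans ?_
  gcongr _ + ?_ * _ * _
  exact le_add_of_nonneg_right zero_le_one

/-- Key energy estimate (Lemma 3.7): for `R = ∑_{i=0}^s α_i (τL)^i` and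
`R̃ = R + ∑_{iv} μ_{iv} τ^{|iv|} L^{iv}` (sum over all integer vectors `iv` with
length `≥ 2`, entries `≥ 1`, `|iv| ≤ s`), one has
`‖R̃ w‖² ≤ ‖R w‖² + C λ ∑_{i=0}^{2s-2} τ^{2i+1} |L^i w|_Γ²`. -/
theorem key_energy_estimate :
    ∀ c₁ c₂ c₃ M : ℝ, 0 < c₁ → 0 < c₂ → 0 < c₃ → 0 < M →
    ∀ s : ℕ, 1 ≤ s →
    ∃ C > (0 : ℝ),
      ∀ (V : Type) [NormedAddCommGroup V] [InnerProductSpace ℝ V],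
      ∀ L Lstar P : V →ₗ[ℝ] V,
        (∀ w v : V, ⟪L w, v⟫ = ⟪w, Lstar v⟫) →
        (∀ v : V, ⟪(L + Lstar) v, v⟫ ≤ 0) →
        (∀ w v : V, ⟪P w, v⟫ = ⟪w, P v⟫) →
        (∀ v : V, P (P v) = P v) →
        ∀ h τ : ℝ, 0 < h → 0 < τ → τ / h ≤ 1 →
        (∀ w : V, ‖P (L w)‖ ≤ c₁ * h ^ (-(1 / 2) : ℝ) * jumpSN L Lstar w) →
        (∀ w : V, ‖P (Lstar w)‖ ≤ c₁ * h ^ (-(1 / 2) : ℝ) * jumpSN L Lstar w) →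
        (∀ v : V, jumpSN L Lstar v ≤ c₂ * h ^ (-(1 / 2) : ℝ) * ‖v‖) →
        (∀ v : V, ‖L v‖ ≤ c₃ * h⁻¹ * ‖v‖) →
        ∀ α : ℕ → ℝ, (∀ i ≤ s, |α i| ≤ M) →
        ∀ S : Finset (List ℕ),
          (∀ iv : List ℕ, iv ∈ S ↔ 2 ≤ iv.length ∧ (∀ x ∈ iv, 1 ≤ x) ∧ iv.sum ≤ s) →
        ∀ μ : List ℕ → ℝ, (∀ iv ∈ S, |μ iv| ≤ M) →
        ∀ w : V,
          ‖(∑ i ∈ Finset.range (s + 1), α i • ((τ • L) ^ i)) w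
              + ∑ iv ∈ S, μ iv • (τ ^ iv.sum • altComp L P iv w)‖ ^ 2
            ≤ ‖(∑ i ∈ Finset.range (s + 1), α i • ((τ • L) ^ i)) w‖ ^ 2
              + C * (τ / h) * ∑ i ∈ Finset.range (2 * s - 1),
                  τ ^ (2 * i + 1) * (jumpSN L Lstar ((L ^ i) w)) ^ 2 := by
  intro c₁ c₂ c₃ M _ _ _ _ s _
  obtain ⟨C, hC, hbound⟩ := key_energy_estimate_general c₁ c₂ c₃ M s
  exact ⟨C, hC, fun V _ _ L Lstar P hadj hneg hP hPP h τ hh hτ hlam hPL _ hJ hL α hα S hS =>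
    hbound V L Lstar P hadj hneg hP hPP h τ hh hτ.le hlam hPL hJ hL α hα S fun iv => (hS iv).mp⟩
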